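/- Let $F : \mathbb{R}^n \to \mathbb{R}^n$ be continuously differentiable, let $u^* \in \mathbb{R}^n$ with $F(u^*) = 0$, and for $i = 0, 1, \dots, N$ let $R_i \in \mathbb{R}^{m_i \times n}$, $P_i := R_i^T$, assume $M_i := R_i\, DF(u^*)\, P_i$ is invertible, and let $T_i$ be differentiable maps on a neighborhood of $u^*$ with $T_i(u^*) = 0$, $R_i F(u - P_i T_i(u)) = 0$, and $DT_i(u^*) = M_i^{-1} R_i\, DF(u^*)$. Then the Jacobian of the hybrid two-level nonlinear Schwarz operator $\mathcal{F}_h(u) := \sum_{i=1}^N P_i T_i(u - P_0 T_0(u)) + P_0 T_0(u)$ at the solution is the hybrid two-level Schwarz preconditioned Jacobian: $D\mathcal{F}_h(u^*) = \Big( \sum_{i=1}^{N} P_i M_i^{-1} R_i \big(I_n - DF(u^*)\, P_0 M_0^{-1} R_0\big) + P_0 M_0^{-1} R_0 \Big)\, DF(u^*)$. -/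

import Mathlib

open Matrix

/-!
Differentiating the implicit equation `R F(v - P T(v)) = 0` at a point where `T` vanishes gives
`R DF (1 - P DT) = 0`, that is `(R DF P) DT = R DF`. Hence `P DT = P (R DF P)⁻¹ R DF`: the
linearized correction is the linear Schwarz solver applied after `DF`. Since the coarse correction
vanishes at this point, the subdomain corrections are linearized there too, so the chain rule
composes these products and the common factor `DF` can be pulled out on the right.
-/

section Schwarz

open Topology

variable {𝕜 E G V V₀ ι : Type*} {W : ι → Type*} [NontriviallyNormedField 𝕜]
  [NormedAddCommGroup E] [NormedSpace 𝕜 E] [NormedAddCommGroup G] [NormedSpace 𝕜 G]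
  [NormedAddCommGroup V] [NormedSpace 𝕜 V] [NormedAddCommGroup V₀] [NormedSpace 𝕜 V₀]
  [∀ i, NormedAddCommGroup (W i)] [∀ i, NormedSpace 𝕜 (W i)]

/-- `T` is, near a point `u` where it vanishes, a nonlinear Schwarz correction for `F`: it solves
the equation `R F(v - P T(v)) = 0` that defines it implicitly. The prolongation `P` need not be
the transpose of the restriction `R`. -/
structure IsSchwarzCorrection (F : E → G) (R : G →L[𝕜] V) (P : V →L[𝕜] E) (T : E → V) (u : E) :
    Prop where
  differentiableAt : DifferentiableAt 𝕜 T u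
  apply_eq_zero : T u = 0
  eventually_restrict_eq_zero : ∀ᶠ v in 𝓝 u, R (F (v - P (T v))) = 0

/-- The hybrid two-level nonlinear Schwarz operator: the coarse correction `T₀` is applied first,
and the subdomain corrections `T i`, `i ∈ s`, are evaluated at the corrected point. -/
def hybridSchwarz (s : Finset ι) (P₀ : V₀ →L[𝕜] E) (T₀ : E → V₀) (P : ∀ i, W i →L[𝕜] E)
    (T : ∀ i, E → W i) (u : E) : E :=
  ∑ i ∈ s, P i (T i (u - P₀ (T₀ u))) + P₀ (T₀ u)

/-- The linear hybrid two-level Schwarz preconditioner for `A`, with coarse solver `B₀` and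
subdomain solvers `B i`, `i ∈ s`; here a solver is the whole product `P M⁻¹ R`. -/
def hybridPreconditioner (s : Finset ι) (A : E →L[𝕜] G) (B₀ : G →L[𝕜] E) (B : ι → G →L[𝕜] E) :
    G →L[𝕜] E :=
  ∑ i ∈ s, B i ∘L (.id 𝕜 G - A ∘L B₀) + B₀

theorem IsSchwarzCorrection.sub_apply_eq_self {F : E → G} {R : G →L[𝕜] V} {P : V →L[𝕜] E}
    {T : E → V} {u : E} (hT : IsSchwarzCorrection F R P T u) : u - P (T u) = u := by
  rw [hT.apply_eq_zero, map_zero, sub_zero]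

theorem IsSchwarzCorrection.hasFDerivAt {F : E → G} {F' : E →L[𝕜] G} {R : G →L[𝕜] V}
    {P : V →L[𝕜] E} {T : E → V} {u : E} {S : V →L[𝕜] V} (hT : IsSchwarzCorrection F R P T u)
    (hF : HasFDerivAt F F' u) (hS : S ∘L R ∘L F' ∘L P = .id 𝕜 V) :
    HasFDerivAt T (S ∘L R ∘L F') u := by
  have hTu : HasFDerivAt T (fderiv 𝕜 T u) u := hT.differentiableAt.hasFDerivAt
  have hsub : HasFDerivAt (fun v ↦ v - P (T v)) (.id 𝕜 E - P ∘L fderiv 𝕜 T u) u :=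
    (hasFDerivAt_id u).sub (P.hasFDerivAt.comp u hTu)
  have hres : HasFDerivAt (fun v ↦ R (F (v - P (T v))))
      (R ∘L F' ∘L (.id 𝕜 E - P ∘L fderiv 𝕜 T u)) u :=
    R.hasFDerivAt.comp u (HasFDerivAt.comp u (hT.sub_apply_eq_self.symm ▸ hF) hsub)
  have hlin : R ∘L F' ∘L (.id 𝕜 E - P ∘L fderiv 𝕜 T u) = 0 :=
    hres.unique (hasFDerivAt_zero_of_eventually_const 0 hT.eventually_restrict_eq_zero)
  suffices fderiv 𝕜 T u = S ∘L R ∘L F' from this ▸ hTu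
  ext h
  have hlin_apply : R (F' h) = R (F' (P (fderiv 𝕜 T u h))) := by
    simpa [sub_eq_zero] using DFunLike.congr_fun hlin h
  calc fderiv 𝕜 T u h = S (R (F' (P (fderiv 𝕜 T u h)))) :=
        (DFunLike.congr_fun hS (fderiv 𝕜 T u h)).symm
    _ = S (R (F' h)) := by rw [hlin_apply]

theorem hasFDerivAt_hybridSchwarz {s : Finset ι} {P₀ : V₀ →L[𝕜] E} {T₀ : E → V₀}
    {T₀' : E →L[𝕜] V₀} {P : ∀ i, W i →L[𝕜] E} {T : ∀ i, E → W i} {T' : ∀ i, E →L[𝕜] W i} {u : E}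
    (hT₀ : HasFDerivAt T₀ T₀' u)
    (hT : ∀ i ∈ s, HasFDerivAt (T i) (T' i) (u - P₀ (T₀ u))) :
    HasFDerivAt (hybridSchwarz s P₀ T₀ P T)
      (∑ i ∈ s, P i ∘L T' i ∘L (.id 𝕜 E - P₀ ∘L T₀') + P₀ ∘L T₀') u := by
  have hcoarse : HasFDerivAt (fun v ↦ P₀ (T₀ v)) (P₀ ∘L T₀') u := P₀.hasFDerivAt.comp u hT₀
  have hsub : HasFDerivAt (fun v ↦ v - P₀ (T₀ v)) (.id 𝕜 E - P₀ ∘L T₀') u :=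
    (hasFDerivAt_id u).sub hcoarse
  exact (HasFDerivAt.fun_sum fun i hi ↦
    (P i).hasFDerivAt.comp u (HasFDerivAt.comp u (hT i hi) hsub)).add hcoarse

theorem hybridPreconditioner_comp (s : Finset ι) (A : E →L[𝕜] G) (B₀ : G →L[𝕜] E)
    (B : ι → G →L[𝕜] E) :
    hybridPreconditioner s A B₀ B ∘L A
      = ∑ i ∈ s, (B i ∘L A) ∘L (.id 𝕜 E - B₀ ∘L A) + B₀ ∘L A := by
  ext h
  simp [hybridPreconditioner]

theorem hybrid_two_level_schwarz_jacobian_general {s : Finset ι} {F : E → G} {F' : E →L[𝕜] G}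
    {u : E} {R₀ : G →L[𝕜] V₀} {P₀ : V₀ →L[𝕜] E} {T₀ : E → V₀} {S₀ : V₀ →L[𝕜] V₀}
    {R : ∀ i, G →L[𝕜] W i} {P : ∀ i, W i →L[𝕜] E} {T : ∀ i, E → W i} {S : ∀ i, W i →L[𝕜] W i}
    (hF : HasFDerivAt F F' u)
    (hT₀ : IsSchwarzCorrection F R₀ P₀ T₀ u) (hS₀ : S₀ ∘L R₀ ∘L F' ∘L P₀ = .id 𝕜 V₀)
    (hT : ∀ i ∈ s, IsSchwarzCorrection F (R i) (P i) (T i) u)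
    (hS : ∀ i ∈ s, S i ∘L R i ∘L F' ∘L P i = .id 𝕜 (W i)) :
    HasFDerivAt (hybridSchwarz s P₀ T₀ P T)
      (hybridPreconditioner s F' (P₀ ∘L S₀ ∘L R₀) (fun i ↦ P i ∘L S i ∘L R i) ∘L F') u := by
  have hsub (i) (hi : i ∈ s) : HasFDerivAt (T i) (S i ∘L R i ∘L F') (u - P₀ (T₀ u)) := by
    rw [hT₀.sub_apply_eq_self]
    exact (hT i hi).hasFDerivAt hF (hS i hi)
  simpa only [hybridPreconditioner_comp, ContinuousLinearMap.comp_assoc] using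
    hasFDerivAt_hybridSchwarz (P := P) (hT₀.hasFDerivAt hF hS₀) hsub

end Schwarz

section Matrix

variable {𝕜 k l n ι : Type*} [NontriviallyNormedField 𝕜]

/-- The continuous linear map `v ↦ A *ᵥ v`, through which matrices enter the operator-theoretic
statements. -/
def mulVecCLM [Fintype l] (A : Matrix k l 𝕜) : (l → 𝕜) →L[𝕜] (k → 𝕜) where
  toLinearMap := A.mulVecLin
  cont := continuous_const.matrix_mulVec continuous_id

@[simp]
theorem mulVecCLM_apply [Fintype l] (A : Matrix k l 𝕜) (v : l → 𝕜) : mulVecCLM A v = A *ᵥ v :=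
  rfl

theorem mulVecCLM_mul [Fintype l] [Fintype n] (A : Matrix k l 𝕜) (B : Matrix l n 𝕜) :
    mulVecCLM (A * B) = mulVecCLM A ∘L mulVecCLM B :=
  ContinuousLinearMap.ext fun v ↦ (mulVec_mulVec v A B).symm

theorem mulVecCLM_one [Fintype l] [DecidableEq l] :
    mulVecCLM (1 : Matrix l l 𝕜) = .id 𝕜 (l → 𝕜) :=
  ContinuousLinearMap.ext one_mulVec

theorem mulVecCLM_inv_comp [Fintype k] [DecidableEq k] [Fintype l] [Fintype n] {R : Matrix k l 𝕜}
    {A : Matrix l n 𝕜} {P : Matrix n k 𝕜} (hM : IsUnit (R * A * P)) :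
    mulVecCLM (R * A * P)⁻¹ ∘L mulVecCLM R ∘L mulVecCLM A ∘L mulVecCLM P = .id 𝕜 (k → 𝕜) := by
  rw [← mulVecCLM_mul, ← mulVecCLM_mul, ← mulVecCLM_mul, ← Matrix.mul_assoc R,
    nonsing_inv_mul _ ((isUnit_iff_isUnit_det _).mp hM), mulVecCLM_one]

theorem hybridPreconditioner_mulVecCLM [Fintype k] [DecidableEq k] [Fintype n] (s : Finset ι)
    (A : Matrix k n 𝕜) (B₀ : Matrix n k 𝕜) (B : ι → Matrix n k 𝕜) :
    hybridPreconditioner s (mulVecCLM A) (mulVecCLM B₀) (fun i ↦ mulVecCLM (B i))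
      = mulVecCLM (∑ i ∈ s, B i * (1 - A * B₀) + B₀) := by
  ext1 v
  simp [hybridPreconditioner, add_mulVec, sum_mulVec, sub_mulVec, mulVec_sub, ← mulVec_mulVec]

end Matrix

/-- The Jacobian of the hybrid two-level nonlinear Schwarz operator
`𝓕ₕ(u) = ∑_{i=1}^N Pᵢ Tᵢ(u - P₀ T₀(u)) + P₀ T₀(u)` at a zero `u*` of `F`
equals the hybrid two-level Schwarz preconditioned Jacobian
`(∑_{i=1}^N Pᵢ Mᵢ⁻¹ Rᵢ (I - DF(u*) P₀ M₀⁻¹ R₀) + P₀ M₀⁻¹ R₀) DF(u*)`,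
with `Pᵢ = Rᵢᵀ` and `Mᵢ = Rᵢ DF(u*) Pᵢ`; index `0` is the coarse level. -/
theorem hybrid_two_level_schwarz_jacobian {n N : ℕ} {m : Fin (N + 1) → ℕ}
    (F : (Fin n → ℝ) → (Fin n → ℝ)) (hF : ContDiff ℝ 1 F)
    (ustar : Fin n → ℝ) (hzero : F ustar = 0)
    (J : Matrix (Fin n) (Fin n) ℝ)
    (hJ : ∀ v, fderiv ℝ F ustar v = J *ᵥ v)
    (R : ∀ i, Matrix (Fin (m i)) (Fin n) ℝ)
    (hMinv : ∀ i, IsUnit (R i * J * (R i)ᵀ))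
    (U : Set (Fin n → ℝ)) (hU : IsOpen U) (hu : ustar ∈ U)
    (T : ∀ i, (Fin n → ℝ) → (Fin (m i) → ℝ))
    (hTdiff : ∀ i, ∀ u ∈ U, DifferentiableAt ℝ (T i) u)
    (hT0 : ∀ i, T i ustar = 0)
    (heq : ∀ i, ∀ u ∈ U, (R i) *ᵥ F (u - (R i)ᵀ *ᵥ T i u) = 0)
    (hDT : ∀ i v, fderiv ℝ (T i) ustar v
      = (R i * J * (R i)ᵀ)⁻¹ *ᵥ ((R i) *ᵥ (J *ᵥ v))) :
    ∀ v, fderiv ℝ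
        (fun u => (∑ i ∈ Finset.univ.erase (0 : Fin (N + 1)),
            (R i)ᵀ *ᵥ T i (u - (R 0)ᵀ *ᵥ T 0 u)) + (R 0)ᵀ *ᵥ T 0 u) ustar v
      = ((∑ i ∈ Finset.univ.erase (0 : Fin (N + 1)),
            (R i)ᵀ * (R i * J * (R i)ᵀ)⁻¹ * R i
              * (1 - J * (R 0)ᵀ * (R 0 * J * (R 0)ᵀ)⁻¹ * R 0))
          + (R 0)ᵀ * (R 0 * J * (R 0)ᵀ)⁻¹ * R 0) *ᵥ (J *ᵥ v) := by
  intro v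
  have hF' : HasFDerivAt F (mulVecCLM J) ustar :=
    (hF.differentiable one_ne_zero ustar).hasFDerivAt.congr_fderiv (ContinuousLinearMap.ext hJ)
  have hT (i) : IsSchwarzCorrection F (mulVecCLM (R i)) (mulVecCLM (R i)ᵀ) (T i) ustar :=
    ⟨hTdiff i ustar hu, hT0 i, Filter.eventually_of_mem (hU.mem_nhds hu) (heq i)⟩
  have hDF := hybrid_two_level_schwarz_jacobian_general (s := Finset.univ.erase 0) hF'
    (hT 0) (mulVecCLM_inv_comp (hMinv 0))
    (fun i _ ↦ hT i) (fun i _ ↦ mulVecCLM_inv_comp (hMinv i))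
  simp only [← mulVecCLM_mul, hybridPreconditioner_mulVecCLM] at hDF
  refine (DFunLike.congr_fun hDF.fderiv v).trans ?_
  simp only [mulVecCLM_apply, mulVec_mulVec, Matrix.mul_assoc]
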